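/- For every integer κ ≥ 2 there exists δ = δ(κ) ∈ (0,1) with the following property: for every n ≥ 1 and every choice of nonnegative reals α_1,…,α_n with α_1+⋯+α_n = 1, the function J(r) := n·H^max_κ(r/n) − Σ_{j=1}^n H^max_κ(r·α_j) is concave on the interval (0, δκ / max{α_1,…,α_n}], and strictly concave there if the α_j are not all equal. -/

import Mathlib

open Real Filter Finset

noncomputable section

/-- `ω(n) = n^n / n!`. -/
def omegaFn (n : ℕ) : ℝ := (n : ℝ) ^ n / (n.factorial : ℝ)

/-- `Ω(V)`: the sum of `ω(v)` over the entries of a vector `V`. -/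
def OmegaVec {I : Type*} [Fintype I] (V : I → ℕ) : ℝ := ∑ i, omegaFn (V i)

/-- `Ω(K)`: the sum of `ω(k)` over the entries of a matrix `K`. -/
def OmegaMat {I J : Type*} [Fintype I] [Fintype J] (K : I → J → ℕ) : ℝ :=
  ∑ i, ∑ j, omegaFn (K i j)

/-- `T_K(R,C)`: the number of nonnegative-integer matrices with row sums `R`,
column sums `C`, and entries bounded by `K` (a bound of `⊤` means unbounded). -/
def tableCount {I J : Type*} [Fintype I] [Fintype J]
    (K : I → J → ℕ∞) (R : I → ℕ) (C : J → ℕ) : ℕ :=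
  Set.ncard {A : I → J → ℕ |
    (∀ i, ∑ j, A i j = R i) ∧ (∀ j, ∑ i, A i j = C j) ∧ ∀ i j, (A i j : ℕ∞) ≤ K i j}

/-- The `s`-fold cloning of a margin vector. -/
def cloneVec {m : ℕ} (s : ℕ) (R : Fin m → ℕ) : Fin s × Fin m → ℕ :=
  fun p => s * R p.2

/-- The `s`-fold cloning of a bound matrix. -/
def cloneMat {m n : ℕ} (s : ℕ) (K : Fin m → Fin n → ℕ∞) :
    Fin s × Fin m → Fin s × Fin n → ℕ∞ :=
  fun p q => K p.2 q.2

/-- The mean of the truncated geometric distribution on `{0,…,κ}` with ratio `q`. -/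
def tgMean (κ : ℕ∞) (q : ℝ) : ℝ :=
  if κ = ⊤ then q / (1 - q)
  else (∑ t ∈ Finset.range (κ.toNat + 1), (t : ℝ) * q ^ t) /
    (∑ t ∈ Finset.range (κ.toNat + 1), q ^ t)

/-- The parameter `q(x;κ)` of the truncated geometric distribution `TG(x;κ)` with mean `x`. -/
def tgQ (κ : ℕ∞) (x : ℝ) : ℝ := sInf {q : ℝ | 0 ≤ q ∧ x ≤ tgMean κ q}

/-- The parameter `p(x;κ)` of the truncated geometric distribution `TG(x;κ)` with mean `x`. -/
def tgP (κ : ℕ∞) (x : ℝ) : ℝ :=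
  if κ = ⊤ then 1 - tgQ κ x
  else (∑ t ∈ Finset.range (κ.toNat + 1), tgQ κ x ^ t)⁻¹

/-- The probability mass function of `TG(x;κ)`: `Pr[X=t] = p q^t` for `t ∈ {0,…,κ}`. -/
def tgPMF (κ : ℕ∞) (x : ℝ) (t : ℕ) : ℝ :=
  if (t : ℕ∞) ≤ κ then tgP κ x * tgQ κ x ^ t else 0

/-- `H^max_κ(x)`: the (base-e) entropy of the truncated geometric distribution `TG(x;κ)`. -/
def Hmax (κ : ℕ∞) (x : ℝ) : ℝ := -∑' t : ℕ, tgPMF κ x t * Real.log (tgPMF κ x t)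

/-- The `(κ+1)`-nomial coefficient `(n choose r)_κ`: the coefficient of `x^r` in
`(1+x+⋯+x^κ)^n`; for `κ = ∞` it is `(r+n-1).choose r`. -/
def knomial (κ : ℕ∞) (n r : ℕ) : ℕ :=
  if κ = ⊤ then (r + n - 1).choose r
  else ((∑ t ∈ Finset.range (κ.toNat + 1), (Polynomial.X : Polynomial ℕ) ^ t) ^ n).coeff r

/-- The independence-heuristic estimate `I_κ(R,C)`. -/
def indepEst (κ : ℕ∞) {I J : Type*} [Fintype I] [Fintype J] (R : I → ℕ) (C : J → ℕ) : ℝ :=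
  ((knomial κ (Fintype.card I * Fintype.card J) (∑ i, R i) : ℝ))⁻¹ *
    (∏ i, (knomial κ (Fintype.card J) (R i) : ℝ)) *
    ∏ j, (knomial κ (Fintype.card I) (C j) : ℝ)

/-- The transportation polytope `Π_κ(R,C)` of real matrices with entries in `[0,κ]`,
row sums `R` and column sums `C`. -/
def transportPolytope (κ : ℕ∞) {m n : ℕ} (R : Fin m → ℕ) (C : Fin n → ℕ) :
    Set (Fin m → Fin n → ℝ) :=
  {Z | (∀ i j, 0 ≤ Z i j) ∧ (∀ i j, κ ≠ ⊤ → Z i j ≤ (κ.toNat : ℝ)) ∧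
    (∀ i, ∑ j, Z i j = (R i : ℝ)) ∧ ∀ j, ∑ i, Z i j = (C j : ℝ)}

/-- The generating function `G(x,y) = ∏_{i,j} (1 + x_i y_j + ⋯ + (x_i y_j)^{k_{ij}})`. -/
def genFun {m n : ℕ} (K : Fin m → Fin n → ℕ) (x : Fin m → ℝ) (y : Fin n → ℝ) : ℝ :=
  ∏ i, ∏ j, ∑ t ∈ Finset.range (K i j + 1), (x i * y j) ^ t

/-- The monomial `x^R = ∏_i x_i^{r_i}`. -/
def monom {m : ℕ} (x : Fin m → ℝ) (R : Fin m → ℕ) : ℝ := ∏ i, x i ^ R i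

/-- The concave roof function `f_K(R,C)`: the supremum of `∑_t α_t ln T_K(R^t,C^t)` over
convex combinations of integer margins averaging to `(R,C)` (and `⊥ = -∞` if none exist). -/
def fK {m n : ℕ} (K : Fin m → Fin n → ℕ) (R : Fin m → ℝ) (C : Fin n → ℝ) : EReal :=
  sSup {v : EReal | ∃ (p : ℕ) (α : Fin p → ℝ)
    (Rs : Fin p → Fin m → ℕ) (Cs : Fin p → Fin n → ℕ),
    1 ≤ p ∧ (∀ t, 0 ≤ α t) ∧ ∑ t, α t = 1 ∧
    (∀ i, ∑ t, α t * (Rs t i : ℝ) = R i) ∧ (∀ j, ∑ t, α t * (Cs t j : ℝ) = C j) ∧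
    (∀ t, 0 < tableCount (fun i j => (K i j : ℕ∞)) (Rs t) (Cs t)) ∧
    v = ((∑ t, α t * Real.log (tableCount (fun i j => (K i j : ℕ∞)) (Rs t) (Cs t)) : ℝ) : EReal)}

/-- `e^x` for an extended real `x`, with `e^{-∞} = 0`. -/
def expE (e : EReal) : ℝ := if e = ⊥ then 0 else Real.exp e.toReal

end

/-!
Near `0⁺` one can write `Hmax κ = negMulLog + L` with `L` analytic at `0`. By homogeneity the
singular part `negMulLog` contributes only a linear term to `J`, so the curvature of `J` comes from
`L`. Differentiating twice turns `L` into `L''` with weights `1 / n²` and `αⱼ²`, which gives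
`r² J''(r) = n φ(r / n) - ∑ⱼ φ(r αⱼ)` for `φ(x) = x² L''(x)`. If `L''(0) > 0`, then `φ` is strictly
convex near `0`, and Jensen's inequality makes the right-hand side negative unless all `αⱼ` agree,
in which case `J = 0`. With `B(q) = 1 + q + ⋯ + q^κ` and `m = B' / B`, one has
`L''(0) = m'(0) / m(0)²`, which equals `1` as soon as `κ ≥ 2`.
-/

open scoped Topology

section LocalCalculus

variable {𝕜 : Type*} [NontriviallyNormedField 𝕜]

theorem iteratedDeriv_comp_mul_left {F : Type*} [NormedAddCommGroup F] [NormedSpace 𝕜 F]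
    (n : ℕ) (f : 𝕜 → F) (c x : 𝕜) :
    iteratedDeriv n (fun y => f (c * y)) x = c ^ n • iteratedDeriv n f (c * x) := by
  induction n generalizing x with
  | zero => simp
  | succ n ih =>
    rw [iteratedDeriv_succ, funext ih, deriv_fun_const_smul_field,
      deriv_comp_mul_left c (iteratedDeriv n f), ← iteratedDeriv_succ, smul_smul, pow_succ]

theorem iteratedDeriv_two_sq_mul_zero {f : 𝕜 → 𝕜} (hf : ContDiffAt 𝕜 2 f 0) :
    iteratedDeriv 2 (fun x => x ^ 2 * f x) 0 = 2 * f 0 := by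
  have hpow : ContDiffAt 𝕜 2 (fun x : 𝕜 => x ^ 2) 0 := by fun_prop
  rw [iteratedDeriv_fun_mul hpow hf]
  simp [Finset.sum_range_succ, iteratedDeriv_succ]

theorem deriv_logDeriv {f : 𝕜 → 𝕜} {a : 𝕜} (hf : DifferentiableAt 𝕜 f a)
    (hf' : DifferentiableAt 𝕜 (deriv f) a) (ha : f a ≠ 0) :
    deriv (logDeriv f) a = iteratedDeriv 2 f a / f a - logDeriv f a ^ 2 := by
  rw [logDeriv, deriv_div hf' hf ha, iteratedDeriv_succ, iteratedDeriv_one, Pi.div_apply]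
  field_simp

theorem analyticAt_logDeriv [CompleteSpace 𝕜] {f : 𝕜 → 𝕜} {a : 𝕜}
    (hf : AnalyticAt 𝕜 f a) (ha : f a ≠ 0) : AnalyticAt 𝕜 (logDeriv f) a :=
  hf.deriv.div hf ha

theorem deriv_mul_eq_one_of_mul_comp_eventually_eq {g m : 𝕜 → 𝕜} {x : 𝕜}
    (hm : DifferentiableAt 𝕜 m (g x)) (hg : DifferentiableAt 𝕜 g x)
    (hgm : ∀ᶠ y in 𝓝 x, g y * m (g y) = y) :
    deriv g x * (m (g x) + g x * deriv m (g x)) = 1 := by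
  have hmul : HasDerivAt (fun y => g y * m (g y))
      (deriv g x * m (g x) + g x * (deriv m (g x) * deriv g x)) x :=
    hg.hasDerivAt.mul (hm.hasDerivAt.comp x hg.hasDerivAt)
  rw [← hmul.unique ((hasDerivAt_id x).congr_of_eventuallyEq hgm)]
  ring

variable {f : ℝ → ℝ} {a : ℝ}

theorem exists_strictMonoOn_ball_of_deriv_pos (hf : ContDiffAt ℝ 1 f a) (hf' : 0 < deriv f a) :
    ∃ ε > 0, StrictMonoOn f (Metric.ball a ε) := by
  have hcont : ContinuousAt (deriv f) a := (hf.derivWithin (m := 0) le_rfl).continuousAt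
  obtain ⟨ε, hε, hball⟩ := Metric.eventually_nhds_iff_ball.1 (hcont.eventually_const_lt hf')
  refine ⟨ε, hε, strictMonoOn_of_deriv_pos (convex_ball a ε) (fun x hx => ?_) fun x hx => ?_⟩
  · exact (differentiableAt_of_deriv_ne_zero (hball x hx).ne').continuousAt.continuousWithinAt
  · exact hball x (interior_subset hx)

theorem exists_strictConvexOn_ball_of_iteratedDeriv_two_pos (hf : ContDiffAt ℝ 2 f a)
    (hf'' : 0 < iteratedDeriv 2 f a) : ∃ ε > 0, StrictConvexOn ℝ (Metric.ball a ε) f := by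
  have hderiv : ContDiffAt ℝ 1 (deriv f) a := hf.derivWithin (m := 1) one_add_one_eq_two.le
  rw [iteratedDeriv_succ, iteratedDeriv_one] at hf''
  obtain ⟨ε₁, hε₁, hmono⟩ := exists_strictMonoOn_ball_of_deriv_pos hderiv hf''
  obtain ⟨ε₂, hε₂, hsmooth⟩ := Metric.eventually_nhds_iff_ball.1 (hf.eventually (by simp))
  refine ⟨min ε₁ ε₂, lt_min hε₁ hε₂, StrictMonoOn.strictConvexOn_of_deriv (convex_ball a _)
    (fun x hx => ?_) (hmono.mono ?_)⟩
  · have hx' : x ∈ Metric.ball a ε₂ := Metric.ball_subset_ball (min_le_right _ _) hx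
    exact (hsmooth x hx').continuousAt.continuousWithinAt
  · exact interior_subset.trans (Metric.ball_subset_ball (min_le_left _ _))

theorem exists_analyticAt_isLeast_superlevel (hf : AnalyticAt ℝ f a) (hf' : 0 < deriv f a) :
    ∃ g : ℝ → ℝ, AnalyticAt ℝ g (f a) ∧ g (f a) = a ∧ (∀ᶠ x in 𝓝 (f a), f (g x) = x) ∧
      ∀ᶠ x in 𝓝[≥] (f a), IsLeast {q | a ≤ q ∧ x ≤ f q} (g x) := by
  set g := hf.hasStrictDerivAt.localInverse f (deriv f a) a hf'.ne'
  have hg : AnalyticAt ℝ g (f a) := hf.analyticAt_localInverse hf'.ne'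
  have hga : g (f a) = a := HasStrictFDerivAt.localInverse_apply_image ..
  have hfg : ∀ᶠ x in 𝓝 (f a), f (g x) = x :=
    HasStrictDerivAt.eventually_right_inverse hf.hasStrictDerivAt hf'.ne'
  obtain ⟨ε, hε, hmono⟩ := exists_strictMonoOn_ball_of_deriv_pos hf.contDiffAt hf'
  have hmem : ∀ᶠ x in 𝓝 (f a), g x ∈ Metric.ball a ε :=
    hg.continuousAt.eventually_mem (hga.symm ▸ Metric.ball_mem_nhds a hε)
  refine ⟨g, hg, hga, hfg, ?_⟩
  filter_upwards [nhdsWithin_le_nhds hfg, nhdsWithin_le_nhds hmem, self_mem_nhdsWithin]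
    with x hfgx hgx hax
  have ha_le : a ≤ g x := by
    rwa [← hmono.le_iff_le (Metric.mem_ball_self hε) hgx, hfgx]
  refine ⟨⟨ha_le, hfgx.ge⟩, fun q ⟨haq, hxq⟩ => ?_⟩
  by_contra! hqg
  have hq : q ∈ Metric.ball a ε :=
    (convex_ball a ε).ordConnected.out (Metric.mem_ball_self hε) hgx ⟨haq, hqg.le⟩
  exact (hmono hq hgx hqg).not_ge (hfgx.trans_le hxq)

end LocalCalculus

section EntropyLoss

variable {ι : Type*} [Fintype ι]

/-- The entropy-loss functional `J`, for an arbitrary function `H` in place of `H^max_κ`. -/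
noncomputable def entropyLoss (H : ℝ → ℝ) (α : ι → ℝ) (r : ℝ) : ℝ :=
  Fintype.card ι * H (r / Fintype.card ι) - ∑ j, H (r * α j)

variable {H L φ : ℝ → ℝ} {α : ι → ℝ} {s : Set ℝ} {r : ℝ}

theorem entropyLoss_add (H L : ℝ → ℝ) (α : ι → ℝ) :
    entropyLoss (H + L) α = entropyLoss H α + entropyLoss L α := by
  ext r
  simp only [entropyLoss, Pi.add_apply, sum_add_distrib]
  ring

theorem entropyLoss_eq_zero_of_const (hsum : ∑ j, α j = 1) (hα : ∀ i j, α i = α j) :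
    entropyLoss H α = 0 := by
  have hα_eq (j : ι) : α j = (Fintype.card ι : ℝ)⁻¹ := by
    rw [sum_congr rfl fun i _ => hα i j, sum_const, card_univ, nsmul_eq_mul] at hsum
    exact eq_inv_of_mul_eq_one_right hsum
  ext r
  simp [entropyLoss, hα_eq, div_eq_mul_inv]

theorem nonempty_of_sum_eq_one (hsum : ∑ j, α j = 1) : Nonempty ι :=
  univ_nonempty_iff.1 (nonempty_of_sum_ne_zero (hsum ▸ one_ne_zero))

theorem entropyLoss_negMulLog (hsum : ∑ j, α j = 1) (r : ℝ) :
    entropyLoss negMulLog α r = r * entropyLoss negMulLog α 1 := by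
  have := nonempty_of_sum_eq_one hsum
  simp only [entropyLoss, div_eq_mul_inv, one_mul, negMulLog_mul, sum_add_distrib, ← sum_mul,
    ← mul_sum, hsum]
  field_simp
  ring

theorem sum_inv_card_smul_mul (hsum : ∑ j, α j = 1) (r : ℝ) :
    ∑ j, (Fintype.card ι : ℝ)⁻¹ • (r * α j) = r / Fintype.card ι := by
  rw [← smul_sum, ← mul_sum, hsum, mul_one, smul_eq_mul, inv_mul_eq_div]

theorem div_card_mem_of_convex (hs : Convex ℝ s) (hsum : ∑ j, α j = 1)
    (hmem : ∀ j, r * α j ∈ s) : r / Fintype.card ι ∈ s := by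
  have := nonempty_of_sum_eq_one hsum
  rw [← sum_inv_card_smul_mul hsum]
  exact hs.sum_mem (fun _ _ => by positivity) (by simp) fun j _ => hmem j

theorem entropyLoss_congr (hs : Convex ℝ s) (hHL : Set.EqOn H L s) (hsum : ∑ j, α j = 1)
    (hmem : ∀ j, r * α j ∈ s) : entropyLoss H α r = entropyLoss L α r := by
  rw [entropyLoss, entropyLoss, hHL (div_card_mem_of_convex hs hsum hmem),
    sum_congr rfl fun j _ => hHL (hmem j)]

theorem entropyLoss_neg_of_strictConvexOn (hφ : StrictConvexOn ℝ s φ) (hsum : ∑ j, α j = 1)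
    (hα : ¬∀ i j, α i = α j) (hr : r ≠ 0) (hmem : ∀ j, r * α j ∈ s) :
    entropyLoss φ α r < 0 := by
  have := nonempty_of_sum_eq_one hsum
  have hcard : (0 : ℝ) < Fintype.card ι := by positivity
  push Not at hα
  obtain ⟨i, j, hij⟩ := hα
  have hjensen := hφ.map_sum_lt (t := univ) (w := fun _ : ι => (Fintype.card ι : ℝ)⁻¹)
    (fun _ _ => by positivity) (by simp) (fun j _ => hmem j)
    ⟨i, mem_univ i, j, mem_univ j, (mul_right_injective₀ hr).ne hij⟩
  rw [sum_inv_card_smul_mul hsum, ← smul_sum, smul_eq_mul, lt_inv_mul_iff₀ hcard] at hjensen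
  exact sub_neg.2 hjensen

theorem contDiffAt_entropyLoss {n : WithTop ℕ∞} (hL : ContDiffAt ℝ n L (r / Fintype.card ι))
    (hLα : ∀ j, ContDiffAt ℝ n L (r * α j)) : ContDiffAt ℝ n (entropyLoss L α) r :=
  (contDiffAt_const.mul (hL.comp r (by fun_prop))).sub
    (ContDiffAt.sum fun j _ => (hLα j).comp r (f := fun r => r * α j) (by fun_prop))

theorem sq_mul_iteratedDeriv_two_entropyLoss (hL : ContDiffAt ℝ 2 L (r / Fintype.card ι))
    (hLα : ∀ j, ContDiffAt ℝ 2 L (r * α j)) :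
    r ^ 2 * iteratedDeriv 2 (entropyLoss L α) r =
      entropyLoss (fun x => x ^ 2 * iteratedDeriv 2 L x) α r := by
  simp only [div_eq_inv_mul, mul_comm r] at hL hLα
  have hscale {c : ℝ} (hc : ContDiffAt ℝ 2 L (c * r)) : ContDiffAt ℝ 2 (fun x => L (c * x)) r :=
    hc.comp r (by fun_prop)
  have hJ : entropyLoss L α = fun x =>
      Fintype.card ι * L ((Fintype.card ι : ℝ)⁻¹ * x) - ∑ j, L (α j * x) := by
    ext x
    simp only [entropyLoss, div_eq_inv_mul, mul_comm x]
  rw [hJ, iteratedDeriv_fun_sub (contDiffAt_const.mul (hscale hL))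
      (ContDiffAt.sum fun j _ => hscale (hLα j)), iteratedDeriv_const_mul_field,
    iteratedDeriv_fun_sum fun j _ => hscale (hLα j)]
  simp only [iteratedDeriv_comp_mul_left, entropyLoss, div_eq_inv_mul, mul_comm r, mul_pow,
    smul_eq_mul, mul_sub, mul_sum]
  congr 1
  · ring
  · exact sum_congr rfl fun j _ => by ring

theorem strictConcaveOn_entropyLoss {t : Set ℝ} (hL : ∀ x ∈ t, ContDiffAt ℝ 2 L x)
    (hφ : StrictConvexOn ℝ t fun x => x ^ 2 * iteratedDeriv 2 L x) (hsum : ∑ j, α j = 1)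
    (hα : ¬∀ i j, α i = α j) (hs : Convex ℝ s) (hs0 : ∀ r ∈ s, r ≠ 0)
    (hst : ∀ r ∈ s, ∀ j, r * α j ∈ t) : StrictConcaveOn ℝ s (entropyLoss L α) := by
  have hL_div (r) (hr : r ∈ s) : ContDiffAt ℝ 2 L (r / Fintype.card ι) :=
    hL _ (div_card_mem_of_convex hφ.1 hsum (hst r hr))
  have hL_mul (r) (hr : r ∈ s) (j : ι) : ContDiffAt ℝ 2 L (r * α j) := hL _ (hst r hr j)
  refine strictConcaveOn_of_deriv2_neg' hs (fun r hr => ?_) fun r hr => ?_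
  · exact (contDiffAt_entropyLoss (hL_div r hr) (hL_mul r hr)).continuousAt.continuousWithinAt
  · have hneg := entropyLoss_neg_of_strictConvexOn hφ hsum hα (hs0 r hr) (hst r hr)
    rw [← sq_mul_iteratedDeriv_two_entropyLoss (hL_div r hr) (hL_mul r hr),
      iteratedDeriv_eq_iterate] at hneg
    exact neg_of_mul_neg_right hneg (sq_nonneg r)

theorem exists_strictConcaveOn_entropyLoss (hL : ContDiffAt ℝ 4 L 0) (hL2 : 0 < iteratedDeriv 2 L 0)
    (hH : ∀ᶠ x in 𝓝[≥] 0, H x = negMulLog x + L x) :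
    ∃ c > 0, ∀ {ι : Type*} [Fintype ι] {α : ι → ℝ}, ∑ j, α j = 1 → ¬(∀ i j, α i = α j) →
      ∀ {s : Set ℝ}, Convex ℝ s → (∀ r ∈ s, r ≠ 0) → (∀ r ∈ s, ∀ j, r * α j ∈ Set.Ico 0 c) →
        StrictConcaveOn ℝ s (entropyLoss H α) := by
  have hL'' : ContDiffAt ℝ 2 (iteratedDeriv 2 L) 0 := by
    rw [iteratedDeriv_succ, iteratedDeriv_one]
    exact (hL.derivWithin (m := 3) (by norm_num)).derivWithin (by norm_num)
  obtain ⟨ε₁, hε₁, hφ⟩ := exists_strictConvexOn_ball_of_iteratedDeriv_two_pos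
    (f := fun x => x ^ 2 * iteratedDeriv 2 L x) (a := 0) (by fun_prop)
    (by rw [iteratedDeriv_two_sq_mul_zero hL'']; positivity)
  obtain ⟨ε₂, hε₂, hsmooth⟩ := Metric.eventually_nhds_iff_ball.1 (hL.eventually (by simp))
  obtain ⟨ε₃, hε₃, hHL⟩ := Metric.eventually_nhds_iff_ball.1 (eventually_nhdsWithin_iff.1 hH)
  refine ⟨min ε₁ (min ε₂ ε₃), by positivity, fun {ι _ α} hsum hα {s} hs hs0 hsα => ?_⟩
  have hball {x : ℝ} (hx : x ∈ Set.Ico 0 (min ε₁ (min ε₂ ε₃))) :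
      x ∈ Metric.ball 0 ε₁ ∧ x ∈ Metric.ball 0 ε₂ ∧ x ∈ Metric.ball 0 ε₃ := by
    simpa [abs_of_nonneg hx.1] using hx.2
  have hstrict : StrictConcaveOn ℝ s (entropyLoss L α) :=
    strictConcaveOn_entropyLoss (fun x hx => (hsmooth x (hball hx).2.1).of_le (by norm_num))
      (hφ.subset (fun x hx => (hball hx).1) (convex_Ico 0 _)) hsum hα hs hs0 hsα
  have hlinear : ConcaveOn ℝ s (entropyLoss negMulLog α) := by
    rw [funext (entropyLoss_negMulLog hsum)]
    exact (LinearMap.mulRight ℝ (entropyLoss negMulLog α 1)).concaveOn hs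
  refine (hlinear.add_strictConcaveOn hstrict).congr fun r hr => ?_
  rw [← entropyLoss_add]
  exact (entropyLoss_congr (convex_Ico 0 _) (fun x hx => hHL x (hball hx).2.2 hx.1) hsum
    (hsα r hr)).symm

end EntropyLoss

section RegularEntropy

/-- Weighting `t` by `bₜ qᵗ`, where `B q = ∑ bₜ qᵗ`, gives a distribution of mean
`x = q * logDeriv B q`, whose entropy for `bₜ ∈ {0, 1}` is `log (B q) - x * log q`. If `g` recovers
`q` from `x`, substituting `log q = log x - log (logDeriv B q)` splits this entropy as
`negMulLog x + regularEntropy B g x`, where the second summand has no singularity at `x = 0`. -/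
noncomputable def regularEntropy (B g : ℝ → ℝ) (x : ℝ) : ℝ :=
  log (B (g x)) + x * log (logDeriv B (g x))

variable {B g : ℝ → ℝ} {x : ℝ}

theorem log_sub_mul_log_eq_negMulLog_add_regularEntropy (hm : logDeriv B (g x) ≠ 0)
    (hmean : g x * logDeriv B (g x) = x) :
    log (B (g x)) - x * log (g x) = negMulLog x + regularEntropy B g x := by
  rcases eq_or_ne (g x) 0 with hg | hg
  · have hx : x = 0 := by rw [← hmean, hg, zero_mul]
    simp [regularEntropy, hx]
  · have hlog : log x = log (g x) + log (logDeriv B (g x)) := by rw [← log_mul hg hm, hmean]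
    rw [regularEntropy, negMulLog, hlog]
    ring

theorem hasDerivAt_regularEntropy (hB : DifferentiableAt ℝ B (g x)) (hB0 : B (g x) ≠ 0)
    (hm : DifferentiableAt ℝ (logDeriv B) (g x)) (hm0 : logDeriv B (g x) ≠ 0)
    (hg : DifferentiableAt ℝ g x) (hmean : ∀ᶠ y in 𝓝 x, g y * logDeriv B (g y) = y) :
    HasDerivAt (regularEntropy B g) (1 + log (logDeriv B (g x))) x := by
  have hlogB : HasDerivAt (fun y => log (B (g y))) (deriv B (g x) * deriv g x / B (g x)) x :=
    (hB.hasDerivAt.comp x hg.hasDerivAt).log hB0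
  have hlogm : HasDerivAt (fun y => log (logDeriv B (g y)))
      (deriv (logDeriv B) (g x) * deriv g x / logDeriv B (g x)) x :=
    (hm.hasDerivAt.comp x hg.hasDerivAt).log hm0
  refine (hlogB.add ((hasDerivAt_id' x).mul hlogm)).congr_deriv ?_
  have hx : x * (deriv (logDeriv B) (g x) * deriv g x / logDeriv B (g x)) =
      g x * deriv (logDeriv B) (g x) * deriv g x := by
    rw [mul_div_left_comm, ← eq_div_of_mul_eq hm0 hmean.self_of_nhds]
    ring
  rw [hx, mul_div_right_comm, ← logDeriv_apply]
  linear_combination deriv_mul_eq_one_of_mul_comp_eventually_eq hm hg hmean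

theorem analyticAt_regularEntropy (hB : AnalyticAt ℝ B (g x)) (hB0 : 0 < B (g x))
    (hm0 : 0 < logDeriv B (g x)) (hg : AnalyticAt ℝ g x) : AnalyticAt ℝ (regularEntropy B g) x :=
  ((hB.comp hg).log hB0).add
    (analyticAt_id.mul (((analyticAt_logDeriv hB hB0.ne').comp hg).log hm0))

theorem iteratedDeriv_two_regularEntropy (hB : AnalyticAt ℝ B (g x)) (hB0 : B (g x) ≠ 0)
    (hm0 : logDeriv B (g x) ≠ 0) (hg : AnalyticAt ℝ g x)
    (hmean : ∀ᶠ y in 𝓝 x, g y * logDeriv B (g y) = y) :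
    iteratedDeriv 2 (regularEntropy B g) x =
      deriv (logDeriv B) (g x) * deriv g x / logDeriv B (g x) := by
  have hm := analyticAt_logDeriv hB hB0
  have hderiv : deriv (regularEntropy B g) =ᶠ[𝓝 x] fun y => 1 + log (logDeriv B (g y)) := by
    filter_upwards [hg.continuousAt.eventually hB.eventually_analyticAt,
      (hB.continuousAt.comp hg.continuousAt).eventually_ne hB0,
      hg.continuousAt.eventually hm.eventually_analyticAt,
      (hm.continuousAt.comp hg.continuousAt).eventually_ne hm0,
      hg.eventually_analyticAt, hmean.eventually_nhds] with y hBy hB0y hmy hm0y hgy hmeany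
    exact (hasDerivAt_regularEntropy hBy.differentiableAt hB0y hmy.differentiableAt hm0y
      hgy.differentiableAt hmeany).deriv
  rw [iteratedDeriv_succ, iteratedDeriv_one, hderiv.deriv_eq]
  exact (((hm.differentiableAt.hasDerivAt.comp x hg.differentiableAt.hasDerivAt).log hm0).const_add
    1).deriv

theorem iteratedDeriv_two_regularEntropy_pos (hB : AnalyticAt ℝ B (g x)) (hB0 : 0 < B (g x))
    (hm0 : 0 < logDeriv B (g x)) (hm' : 0 < deriv (logDeriv B) (g x)) (hg : AnalyticAt ℝ g x)
    (hg0 : 0 ≤ g x) (hmean : ∀ᶠ y in 𝓝 x, g y * logDeriv B (g y) = y) :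
    0 < iteratedDeriv 2 (regularEntropy B g) x := by
  have hderiv_mul := deriv_mul_eq_one_of_mul_comp_eventually_eq
    (analyticAt_logDeriv hB hB0.ne').differentiableAt hg.differentiableAt hmean
  have hderiv : 0 < deriv g x :=
    pos_of_mul_pos_left (hderiv_mul ▸ one_pos) (by positivity)
  rw [iteratedDeriv_two_regularEntropy hB hB0.ne' hm0.ne' hg hmean]
  positivity

end RegularEntropy

section TruncatedGeometric

/-- The partition function of the truncated geometric distribution of ratio `q`, equal to
`(tgP κ x)⁻¹` when `q = tgQ κ x`. -/
noncomputable def tgPartition (κ : ℕ) (q : ℝ) : ℝ := ∑ t ∈ Finset.range (κ + 1), q ^ t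

theorem tgPartition_pos (κ : ℕ) {q : ℝ} (hq : 0 ≤ q) : 0 < tgPartition κ q := by
  rw [tgPartition, Finset.sum_range_succ']
  positivity

theorem analyticAt_tgPartition (κ : ℕ) (q : ℝ) : AnalyticAt ℝ (tgPartition κ) q :=
  Finset.analyticAt_fun_sum _ fun t _ => analyticAt_id.pow t

theorem iteratedDeriv_tgPartition_zero {κ k : ℕ} (hk : k ≤ κ) :
    iteratedDeriv k (tgPartition κ) 0 = k.factorial := by
  unfold tgPartition
  rw [iteratedDeriv_fun_sum fun t _ => by fun_prop]
  simp only [iteratedDeriv_fun_pow_zero]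
  simp [hk]

theorem tgPartition_zero (κ : ℕ) : tgPartition κ 0 = 1 := by
  simpa using iteratedDeriv_tgPartition_zero κ.zero_le

theorem logDeriv_tgPartition_zero {κ : ℕ} (hκ : 1 ≤ κ) : logDeriv (tgPartition κ) 0 = 1 := by
  rw [logDeriv_apply, ← iteratedDeriv_one, iteratedDeriv_tgPartition_zero hκ, tgPartition_zero,
    Nat.factorial_one, Nat.cast_one, div_one]

theorem deriv_logDeriv_tgPartition_zero {κ : ℕ} (hκ : 2 ≤ κ) :
    deriv (logDeriv (tgPartition κ)) 0 = 1 := by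
  have hB := analyticAt_tgPartition κ 0
  have hB0 : tgPartition κ 0 ≠ 0 := (tgPartition_pos κ le_rfl).ne'
  rw [deriv_logDeriv hB.differentiableAt hB.deriv.differentiableAt hB0,
    iteratedDeriv_tgPartition_zero hκ, logDeriv_tgPartition_zero (one_le_two.trans hκ),
    tgPartition_zero, Nat.factorial_two]
  norm_num

theorem tgMean_natCast (κ : ℕ) (q : ℝ) :
    tgMean κ q = (∑ t ∈ Finset.range (κ + 1), (t : ℝ) * q ^ t) / tgPartition κ q := by
  simp [tgMean, tgPartition]

theorem tgMean_eq_mul_logDeriv (κ : ℕ) (q : ℝ) : tgMean κ q = q * logDeriv (tgPartition κ) q := by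
  have hderiv : deriv (tgPartition κ) q = ∑ t ∈ Finset.range (κ + 1), (t : ℝ) * q ^ (t - 1) :=
    (HasDerivAt.fun_sum fun t _ => hasDerivAt_pow t q).deriv
  rw [logDeriv_apply, hderiv, ← mul_div_assoc, mul_sum, tgMean_natCast]
  congr! 2 with t
  cases t <;> simp [pow_succ', mul_left_comm]

theorem tgQ_nonneg (κ : ℕ∞) (x : ℝ) : 0 ≤ tgQ κ x :=
  sInf_nonneg fun _ hq => hq.1

theorem tgPMF_natCast (κ : ℕ) (x : ℝ) {t : ℕ} (ht : t ≤ κ) :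
    tgPMF κ x t = (tgPartition κ (tgQ κ x))⁻¹ * tgQ κ x ^ t := by
  simp [tgPMF, tgP, tgPartition, ht]

theorem Hmax_natCast_eq_sum (κ : ℕ) (x : ℝ) :
    Hmax κ x = ∑ t ∈ Finset.range (κ + 1),
      negMulLog ((tgPartition κ (tgQ κ x))⁻¹ * tgQ κ x ^ t) := by
  have hsupport : ∀ t ∉ Finset.range (κ + 1), tgPMF κ x t * log (tgPMF κ x t) = 0 := by
    intro t ht
    have ht' : ¬(t : ℕ∞) ≤ κ := by simpa [Nat.lt_succ_iff] using ht
    simp [tgPMF, ht']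
  rw [Hmax, tsum_eq_sum hsupport, ← sum_neg_distrib]
  refine sum_congr rfl fun t ht => ?_
  rw [tgPMF_natCast κ x (Finset.mem_range_succ_iff.1 ht), negMulLog, neg_mul]

theorem Hmax_natCast (κ : ℕ) (x : ℝ) :
    Hmax κ x = log (tgPartition κ (tgQ κ x)) - tgMean κ (tgQ κ x) * log (tgQ κ x) := by
  have hB := tgPartition_pos κ (tgQ_nonneg κ x)
  rw [Hmax_natCast_eq_sum, tgMean_natCast]
  set q := tgQ κ x
  have hpow (t : ℕ) : negMulLog (q ^ t) = -(t * q ^ t * log q) := by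
    rw [negMulLog, log_pow]
    ring
  simp only [negMulLog_mul, hpow, sum_add_distrib, ← mul_sum, ← sum_mul, sum_neg_distrib]
  rw [← tgPartition, negMulLog, log_inv]
  field_simp
  ring

theorem analyticAt_tgMean (κ : ℕ) {q : ℝ} (hq : 0 ≤ q) : AnalyticAt ℝ (tgMean κ) q := by
  rw [funext (tgMean_eq_mul_logDeriv κ)]
  have hB : tgPartition κ q ≠ 0 := (tgPartition_pos κ hq).ne'
  exact analyticAt_id.mul (analyticAt_logDeriv (analyticAt_tgPartition κ q) hB)

theorem tgMean_zero (κ : ℕ) : tgMean κ 0 = 0 := by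
  rw [tgMean_eq_mul_logDeriv, zero_mul]

theorem deriv_tgMean_zero {κ : ℕ} (hκ : 1 ≤ κ) : deriv (tgMean κ) 0 = 1 := by
  have hm := analyticAt_logDeriv (analyticAt_tgPartition κ 0) (tgPartition_pos κ le_rfl).ne'
  rw [funext (tgMean_eq_mul_logDeriv κ), deriv_fun_mul differentiableAt_fun_id hm.differentiableAt,
    deriv_id'', logDeriv_tgPartition_zero hκ, one_mul, zero_mul, add_zero]

theorem exists_Hmax_eq_negMulLog_add {κ : ℕ} (hκ : 2 ≤ κ) :
    ∃ L : ℝ → ℝ, AnalyticAt ℝ L 0 ∧ 0 < iteratedDeriv 2 L 0 ∧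
      ∀ᶠ x in 𝓝[≥] 0, Hmax κ x = negMulLog x + L x := by
  have hκ1 : 1 ≤ κ := one_le_two.trans hκ
  obtain ⟨g, hg, hg0, hmean, hleast⟩ := exists_analyticAt_isLeast_superlevel
    (analyticAt_tgMean κ le_rfl) (deriv_tgMean_zero hκ1 ▸ one_pos)
  rw [tgMean_zero] at hg hg0 hmean hleast
  have hB := analyticAt_tgPartition κ (g 0)
  have hB0 : 0 < tgPartition κ (g 0) := tgPartition_pos κ hg0.ge
  have hm : AnalyticAt ℝ (fun x => logDeriv (tgPartition κ) (g x)) 0 :=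
    (analyticAt_logDeriv hB hB0.ne').comp hg
  have hm0 : 0 < logDeriv (tgPartition κ) (g 0) := by simp [hg0, logDeriv_tgPartition_zero hκ1]
  have hm' : 0 < deriv (logDeriv (tgPartition κ)) (g 0) := by
    simp [hg0, deriv_logDeriv_tgPartition_zero hκ]
  refine ⟨regularEntropy (tgPartition κ) g, analyticAt_regularEntropy hB hB0 hm0 hg,
    iteratedDeriv_two_regularEntropy_pos hB hB0 hm0 hm' hg hg0.ge ?_, ?_⟩
  · simpa only [tgMean_eq_mul_logDeriv] using hmean
  · filter_upwards [hleast, nhdsWithin_le_nhds hmean,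
      nhdsWithin_le_nhds (hm.continuousAt.eventually_ne hm0.ne')] with x hleast_x hmean_x hm_x
    have htgQ : tgQ κ x = g x := hleast_x.csInf_eq
    rw [Hmax_natCast, htgQ, hmean_x]
    rw [tgMean_eq_mul_logDeriv] at hmean_x
    exact log_sub_mul_log_eq_negMulLog_add_regularEntropy hm_x hmean_x

end TruncatedGeometric

/-- **Lemma (concavity of the entropy-loss function `J`).** For `κ ≥ 2` there is
`δ = δ(κ) ∈ (0,1)` such that `J(r) = n H^max_κ(r/n) - ∑_j H^max_κ(r α_j)` is concave on
`(0, δκ/max_j α_j]`, strictly so when the `α_j` are not all equal. -/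
theorem entropyLoss_concave (κ : ℕ) (hκ : 2 ≤ κ) :
    ∃ δ : ℝ, δ ∈ Set.Ioo (0 : ℝ) 1 ∧
      ∀ (n : ℕ), 0 < n → ∀ α : Fin n → ℝ, (∀ j, 0 ≤ α j) → ∑ j, α j = 1 →
        ConcaveOn ℝ (Set.Ioc (0 : ℝ) (δ * κ / ⨆ j, α j))
          (fun r => (n : ℝ) * Hmax (κ : ℕ∞) (r / n) - ∑ j, Hmax (κ : ℕ∞) (r * α j)) ∧
        (¬(∀ j j', α j = α j') →
          StrictConcaveOn ℝ (Set.Ioc (0 : ℝ) (δ * κ / ⨆ j, α j))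
            (fun r => (n : ℝ) * Hmax (κ : ℕ∞) (r / n) -
              ∑ j, Hmax (κ : ℕ∞) (r * α j))) := by
  obtain ⟨L, hL, hL2, hHL⟩ := exists_Hmax_eq_negMulLog_add hκ
  obtain ⟨c, hc, hstrict⟩ := exists_strictConcaveOn_entropyLoss hL.contDiffAt hL2 hHL
  have hκ0 : (0 : ℝ) < κ := by positivity
  obtain ⟨δ, hδ0, hδ⟩ := exists_between (lt_min one_pos (div_pos hc hκ0))
  refine ⟨δ, ⟨hδ0, hδ.trans_le (min_le_left _ _)⟩, fun n _ α hα hsum => ?_⟩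
  have hJ : entropyLoss (Hmax κ) α =
      fun r => (n : ℝ) * Hmax κ (r / n) - ∑ j, Hmax κ (r * α j) := by
    ext r
    rw [entropyLoss, Fintype.card_fin]
  have hmem (r) (hr : r ∈ Set.Ioc 0 (δ * κ / ⨆ j, α j)) (j : Fin n) : r * α j ∈ Set.Ico 0 c := by
    refine ⟨mul_nonneg hr.1.le (hα j), ?_⟩
    calc r * α j ≤ r * ⨆ j, α j :=
          mul_le_mul_of_nonneg_left (le_ciSup (Set.finite_range α).bddAbove j) hr.1.le
      _ ≤ δ * κ := mul_le_of_le_div₀ (by positivity) (Real.iSup_nonneg hα) hr.2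
      _ < c := (lt_div_iff₀ hκ0).1 (hδ.trans_le (min_le_right _ _))
  have hJ_strict (hne : ¬∀ j j', α j = α j') :=
    hstrict hsum hne (convex_Ioc 0 (δ * κ / ⨆ j, α j)) (fun r hr => hr.1.ne') hmem
  rw [← hJ]
  refine ⟨?_, hJ_strict⟩
  by_cases hconst : ∀ j j', α j = α j'
  · exact entropyLoss_eq_zero_of_const hsum hconst ▸ concaveOn_const 0 (convex_Ioc _ _)
  · exact (hJ_strict hconst).concaveOn
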